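/- Let n, d, q be positive integers, let κ, ν, λ be positive reals, let A ∈ ℝ^{n×n}, let Z₀ ∈ ℝ^{n×n} be such that A + Z₀ is symmetric with all entries nonnegative, and let W₀ be a collection of n real d×q matrices satisfying ‖W₀‖_F ≤ √(νκ) / (2λ(√n + 1)). Then for all Z ∈ ℝ^{n×n} and all collections W of n real d×q matrices, R(Z,W) = (ν/2)‖Z‖_F² + (κ/2)‖W‖_F² + λ·(2·Q(W, Λ(Z), W₀) + Q(W, Λ(A+Z₀), W)) ≥ 0. -/

import Mathlib

open scoped BigOperators
open Matrix

/-- Squared Frobenius norm of a matrix. -/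
noncomputable def frobSq {n m : ℕ} (M : Matrix (Fin n) (Fin m) ℝ) : ℝ :=
  ∑ i, ∑ j, (M i j) ^ 2

/-- Frobenius norm of a matrix. -/
noncomputable def frob {n m : ℕ} (M : Matrix (Fin n) (Fin m) ℝ) : ℝ :=
  Real.sqrt (frobSq M)

/-- Squared Frobenius norm of a collection of `n` matrices. -/
noncomputable def collFrobSq {n d q : ℕ} (W : Fin n → Matrix (Fin d) (Fin q) ℝ) : ℝ :=
  ∑ i, frobSq (W i)

/-- Frobenius norm of a collection of `n` matrices. -/
noncomputable def collFrob {n d q : ℕ} (W : Fin n → Matrix (Fin d) (Fin q) ℝ) : ℝ :=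
  Real.sqrt (collFrobSq W)

/-- Diagonal degree matrix of a square matrix. -/
noncomputable def degMatrix {n : ℕ} (Z : Matrix (Fin n) (Fin n) ℝ) : Matrix (Fin n) (Fin n) ℝ :=
  Matrix.diagonal (fun i => ∑ j, Z i j)

/-- Graph Laplacian of a square matrix. -/
noncomputable def lap {n : ℕ} (Z : Matrix (Fin n) (Fin n) ℝ) : Matrix (Fin n) (Fin n) ℝ :=
  degMatrix Z - Z

/-- The bilinear form `Q(W, M, V) = ∑ i j, M i j * Tr((W i)ᵀ (V j))`. -/
noncomputable def QForm {n d q : ℕ} (W : Fin n → Matrix (Fin d) (Fin q) ℝ)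
    (M : Matrix (Fin n) (Fin n) ℝ) (V : Fin n → Matrix (Fin d) (Fin q) ℝ) : ℝ :=
  ∑ i, ∑ j, M i j * ((W i)ᵀ * V j).trace

lemma ip_eq {d q : ℕ} (X Y : Matrix (Fin d) (Fin q) ℝ) :
    (Xᵀ * Y).trace = ∑ p : Fin d × Fin q, X p.1 p.2 * Y p.1 p.2 := by
  rw [Fintype.sum_prod_type, Finset.sum_comm]
  simp [Matrix.trace, Matrix.mul_apply]

lemma frobSq_eq {d q : ℕ} (X : Matrix (Fin d) (Fin q) ℝ) :
    frobSq X = ∑ p : Fin d × Fin q, X p.1 p.2 ^ 2 := by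
  rw [Fintype.sum_prod_type]; rfl

lemma ip_sq_le {d q : ℕ} (X Y : Matrix (Fin d) (Fin q) ℝ) :
    ((Xᵀ * Y).trace) ^ 2 ≤ frobSq X * frobSq Y := by
  rw [ip_eq, frobSq_eq, frobSq_eq]
  exact Finset.sum_mul_sq_le_sq_mul_sq _ _ _

lemma frobSq_nonneg {d q : ℕ} (X : Matrix (Fin d) (Fin q) ℝ) : 0 ≤ frobSq X := by
  unfold frobSq; positivity

lemma collFrobSq_nonneg {n d q : ℕ} (X : Fin n → Matrix (Fin d) (Fin q) ℝ) :
    0 ≤ collFrobSq X := Finset.sum_nonneg fun i _ => frobSq_nonneg _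

lemma QForm_lap {n d q : ℕ} (W V : Fin n → Matrix (Fin d) (Fin q) ℝ)
    (M : Matrix (Fin n) (Fin n) ℝ) :
    QForm W (lap M) V = (∑ i, ∑ j, M i j * ((W i)ᵀ * V i).trace)
      - ∑ i, ∑ j, M i j * ((W i)ᵀ * V j).trace := by
  unfold QForm lap degMatrix
  rw [← Finset.sum_sub_distrib]
  refine Finset.sum_congr rfl fun i _ => ?_
  simp only [Matrix.sub_apply, sub_mul, Finset.sum_sub_distrib, Matrix.diagonal_apply, ite_mul,
    zero_mul, Finset.sum_ite_eq, Finset.mem_univ, if_true, Finset.sum_mul]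

lemma QForm_lap_nonneg {n d q : ℕ} (W : Fin n → Matrix (Fin d) (Fin q) ℝ)
    (S : Matrix (Fin n) (Fin n) ℝ) (hs : S.IsSymm) (hp : ∀ i j, 0 ≤ S i j) :
    0 ≤ QForm W (lap S) W := by
  rw [QForm_lap]
  have h1 : (∑ i, ∑ j, S i j * ((W i)ᵀ * W i).trace)
      = ∑ i, ∑ j, S i j * ((W j)ᵀ * W j).trace := by
    rw [Finset.sum_comm]
    refine Finset.sum_congr rfl fun i _ => Finset.sum_congr rfl fun j _ => ?_
    rw [hs.apply]
  have h2 : 0 ≤ ∑ i, ∑ j, S i j * (((W i)ᵀ * W i).trace + ((W j)ᵀ * W j).trace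
      - 2 * ((W i)ᵀ * W j).trace) := by
    refine Finset.sum_nonneg fun i _ => Finset.sum_nonneg fun j _ => mul_nonneg (hp i j) ?_
    rw [ip_eq, ip_eq, ip_eq, Finset.mul_sum, ← Finset.sum_add_distrib, ← Finset.sum_sub_distrib]
    refine Finset.sum_nonneg fun p _ => ?_
    nlinarith [sq_nonneg (W i p.1 p.2 - W j p.1 p.2)]
  have h3 : (∑ i, ∑ j, S i j * (((W i)ᵀ * W i).trace + ((W j)ᵀ * W j).trace
      - 2 * ((W i)ᵀ * W j).trace)) = (∑ i, ∑ j, S i j * ((W i)ᵀ * W i).trace)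
      + (∑ i, ∑ j, S i j * ((W j)ᵀ * W j).trace)
      - 2 * ∑ i, ∑ j, S i j * ((W i)ᵀ * W j).trace := by
    simp only [Finset.mul_sum, ← Finset.sum_add_distrib, ← Finset.sum_sub_distrib]
    refine Finset.sum_congr rfl fun i _ => Finset.sum_congr rfl fun j _ => ?_
    ring
  linarith

lemma sum_abs_le {n : ℕ} (Z T : Matrix (Fin n) (Fin n) ℝ) {B : ℝ} (hB : frobSq T ≤ B) :
    |∑ i, ∑ j, Z i j * T i j| ≤ Real.sqrt (frobSq Z) * Real.sqrt B := by
  rw [← Real.sqrt_mul (frobSq_nonneg Z)]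
  apply Real.abs_le_sqrt
  refine le_trans ?_ (mul_le_mul_of_nonneg_left hB (frobSq_nonneg Z))
  rw [← Fintype.sum_prod_type' (fun i j => Z i j * T i j), frobSq_eq, frobSq_eq]
  exact Finset.sum_mul_sq_le_sq_mul_sq _ _ _

lemma QForm_bound {n d q : ℕ} (W V : Fin n → Matrix (Fin d) (Fin q) ℝ)
    (Z : Matrix (Fin n) (Fin n) ℝ) :
    |QForm W (lap Z) V| ≤
      Real.sqrt (frobSq Z) * ((Real.sqrt n + 1) * (collFrob W * collFrob V)) := by
  have e : collFrob W * collFrob V = Real.sqrt (collFrobSq W * collFrobSq V) :=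
    (Real.sqrt_mul (collFrobSq_nonneg W) _).symm
  have b1 : frobSq (Matrix.of fun i _ : Fin n => ((W i)ᵀ * V i).trace)
      ≤ n * (collFrobSq W * collFrobSq V) := by
    simp only [frobSq, Matrix.of_apply, Finset.sum_const, Finset.card_univ, Fintype.card_fin,
      nsmul_eq_mul, ← Finset.mul_sum]
    refine mul_le_mul_of_nonneg_left ?_ (Nat.cast_nonneg n)
    conv_rhs => rw [collFrobSq, Finset.sum_mul]
    refine Finset.sum_le_sum fun i _ => (ip_sq_le _ _).trans ?_
    refine mul_le_mul_of_nonneg_left ?_ (frobSq_nonneg _)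
    exact Finset.single_le_sum (f := fun i => frobSq (V i)) (fun i _ => frobSq_nonneg _)
      (Finset.mem_univ i)
  have b2 : frobSq (Matrix.of fun i j : Fin n => ((W i)ᵀ * V j).trace)
      ≤ collFrobSq W * collFrobSq V := by
    conv_rhs => rw [collFrobSq, collFrobSq, Finset.sum_mul_sum]
    exact Finset.sum_le_sum fun i _ => Finset.sum_le_sum fun j _ => ip_sq_le _ _
  have c1 := sum_abs_le Z _ b1
  have c2 := sum_abs_le Z _ b2
  simp only [Matrix.of_apply] at c1 c2
  rw [QForm_lap, e]
  rw [Real.sqrt_mul (Nat.cast_nonneg n)] at c1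
  refine (abs_sub _ _).trans ?_
  linarith

/-- If `‖W₀‖_F ≤ √(νκ)/(2λ(√n+1))` then the quadratic part `R(Z,W)` of
`Ψ(A+Z₀+Z, W₀+W)` is nonnegative for all directions `(Z,W)`. -/
theorem stmt10 (n d q : ℕ) (hn : 0 < n) (hd : 0 < d) (hq : 0 < q)
    (κ ν lam : ℝ) (hκ : 0 < κ) (hν : 0 < ν) (hlam : 0 < lam)
    (A Z₀ : Matrix (Fin n) (Fin n) ℝ) (hsymm : (A + Z₀).IsSymm)
    (hpos : ∀ i j, 0 ≤ (A + Z₀) i j)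
    (W₀ : Fin n → Matrix (Fin d) (Fin q) ℝ)
    (hW₀ : collFrob W₀ ≤ Real.sqrt (ν * κ) / (2 * lam * (Real.sqrt n + 1))) :
    ∀ (Z : Matrix (Fin n) (Fin n) ℝ) (W : Fin n → Matrix (Fin d) (Fin q) ℝ),
      0 ≤ ν / 2 * frobSq Z + κ / 2 * collFrobSq W
          + lam * (2 * QForm W (lap Z) W₀ + QForm W (lap (A + Z₀)) W) := by

  intro Z W
  have hP := QForm_lap_nonneg W (A + Z₀) hsymm hpos
  have hB := QForm_bound W W₀ Z
  have hz := Real.sq_sqrt (frobSq_nonneg Z)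
  have hw : collFrob W ^ 2 = collFrobSq W := Real.sq_sqrt (collFrobSq_nonneg W)
  have hz0 := Real.sqrt_nonneg (frobSq Z)
  have hw0 : 0 ≤ collFrob W := Real.sqrt_nonneg _
  rw [Real.sqrt_mul hν.le, le_div_iff₀ (by positivity)] at hW₀
  have h1 := mul_le_mul_of_nonneg_left hW₀ (mul_nonneg hz0 hw0)
  have h2 := mul_le_mul_of_nonneg_left ((neg_le_abs _).trans hB) (by positivity : 0 ≤ 2 * lam)
  have h3 := mul_nonneg hlam.le hP
  have hsν := Real.sq_sqrt hν.le
  have hsκ := Real.sq_sqrt hκ.le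
  have h4 := sq_nonneg (√ν * √(frobSq Z) - √κ * collFrob W)
  rw [sub_sq, mul_pow, mul_pow, hsν, hsκ, hz, hw] at h4
  linarith
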